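/- The infinitesimal deformation η₁ with base C₁ = K ⊕ H′ is universal: for any infinitesimal deformation λ of L with finite dimensional base A there exists a unique algebra homomorphism φ: C₁ → A with φ(1)=1 and ε_A ∘ φ = ε_{C₁} such that the push-out φ_*η₁ is equivalent to λ. -/

import Mathlib

open TensorProduct

noncomputable def reduceTensor {K A L : Type*} [Field K] [CommRing A] [Algebra K A]
    [AddCommGroup L] [Module K L] (ξ : A →ₗ[K] K) :
    A ⊗[K] L →ₗ[K] L :=
  (TensorProduct.lid K L).toLinearMap.comp (TensorProduct.map ξ LinearMap.id)

/-!
A functional `ζ` on the base `A` with `ζ 1 = 0` turns a deformation of `L` into a 2-cochain of `L`.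
Since `𝔐² = 0`, such a `ζ` is a derivation along the augmentation, so this cochain is a cocycle, and
an equivalence of deformations changes it by a coboundary. Conversely, coboundaries chosen linearly
in `ζ` assemble to an equivalence `1 + N` with `N² = 0`. Hence deformations with base `A` are
classified by linear maps `𝔐′ → HL²(L;L) = H`. For the push-out of `η₁` along `φ : C₁ → A` this map
is the transpose of `φ : H′ → 𝔐`, and an augmented algebra homomorphism out of the square-zero
extension `C₁ = K ⊕ H′` is the same thing as a linear map `H′ → 𝔐`.
-/

section Leibniz

variable {K L H C : Type*} [CommRing K] [AddCommGroup L] [Module K L]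
  [AddCommGroup H] [Module K H] [CommRing C] [Algebra K C]

/-- The coboundary operator `CL¹(L;L) → CL²(L;L)` of the (right) Leibniz bracket `b`. -/
def leibnizCoboundary (b : L →ₗ[K] L →ₗ[K] L) : (L →ₗ[K] L) →ₗ[K] L →ₗ[K] L →ₗ[K] L where
  toFun g := b.compl₂ g + b.comp g - b.compr₂ g
  map_add' f g := by
    ext
    simp only [map_add, LinearMap.add_apply, LinearMap.sub_apply, LinearMap.compl₂_apply,
      LinearMap.comp_apply, LinearMap.compr₂_apply]
    abel
  map_smul' c g := by ext; simp [smul_sub]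

@[simp]
theorem leibnizCoboundary_apply (b : L →ₗ[K] L →ₗ[K] L) (g : L →ₗ[K] L) (x y : L) :
    leibnizCoboundary b g x y = b x (g y) + b (g x) y - g (b x y) := rfl

/-- The space `ZL²(L;L)` of Leibniz 2-cocycles of the bracket `b`. -/
def leibnizCocycles (b : L →ₗ[K] L →ₗ[K] L) : Submodule K (L →ₗ[K] L →ₗ[K] L) where
  carrier := {ψ | ∀ x y z, b x (ψ y z) + b (ψ x z) y - b (ψ x y) z
    - ψ (b x y) z + ψ (b x z) y + ψ x (b y z) = 0}
  zero_mem' := by simp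
  add_mem' {ψ χ} hψ hχ x y z := by
    simp only [LinearMap.add_apply, map_add]
    refine Eq.trans ?_ ((congrArg₂ (· + ·) (hψ x y z) (hχ x y z)).trans (add_zero 0))
    abel
  smul_mem' c ψ hψ x y z := by
    simp only [LinearMap.smul_apply, map_smul, ← smul_add, ← smul_sub, hψ x y z, smul_zero]

/-- The class of a 2-cochain in `CL²(L;L)` modulo coboundaries. -/
abbrev leibnizClass (b : L →ₗ[K] L →ₗ[K] L) :
    (L →ₗ[K] L →ₗ[K] L) →ₗ[K] (L →ₗ[K] L →ₗ[K] L) ⧸ LinearMap.range (leibnizCoboundary b) :=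
  Submodule.mkQ _

/-- The cohomology `HL²(L;L)`, realised inside `CL²(L;L)` modulo coboundaries so that it makes
sense before the Leibniz identity for `b` is known. -/
def leibnizCohomology (b : L →ₗ[K] L →ₗ[K] L) :
    Submodule K ((L →ₗ[K] L →ₗ[K] L) ⧸ LinearMap.range (leibnizCoboundary b)) :=
  (leibnizCocycles b).map (leibnizClass b)

theorem leibnizClass_eq_iff {b ψ χ : L →ₗ[K] L →ₗ[K] L} :
    leibnizClass b ψ = leibnizClass b χ ↔ ∃ g, ψ = χ + leibnizCoboundary b g := by
  simp only [Submodule.mkQ_apply, Submodule.Quotient.eq, LinearMap.mem_range,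
    eq_sub_iff_add_eq', eq_comm (b := ψ)]

theorem leibnizClass_eq_zero_iff {b ψ : L →ₗ[K] L →ₗ[K] L} :
    leibnizClass b ψ = 0 ↔ ∃ g, ψ = leibnizCoboundary b g := by
  rw [← map_zero (leibnizClass b), leibnizClass_eq_iff]
  simp only [zero_add]

theorem injective_leibnizClass_comp {b : L →ₗ[K] L →ₗ[K] L} {μ : H →ₗ[K] L →ₗ[K] L →ₗ[K] L}
    (h : ∀ α, (∃ g, μ α = leibnizCoboundary b g) → α = 0) :
    Function.Injective (leibnizClass b ∘ₗ μ) :=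
  (injective_iff_map_eq_zero _).2 fun α hα => h α (leibnizClass_eq_zero_iff.1 hα)

theorem range_leibnizClass_comp {b : L →ₗ[K] L →ₗ[K] L} {μ : H →ₗ[K] L →ₗ[K] L →ₗ[K] L}
    (hμ : ∀ α, μ α ∈ leibnizCocycles b)
    (h : ∀ ψ ∈ leibnizCocycles b, ∃ α g, ψ = μ α + leibnizCoboundary b g) :
    LinearMap.range (leibnizClass b ∘ₗ μ) = leibnizCohomology b := by
  refine le_antisymm ?_ ?_
  · rintro _ ⟨α, rfl⟩
    exact Submodule.mem_map_of_mem (hμ α)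
  · rintro _ ⟨ψ, hψ, rfl⟩
    obtain ⟨α, hα⟩ := h ψ hψ
    exact ⟨α, (leibnizClass_eq_iff.2 hα).symm⟩

/-- The bracket of the deformation `η₁` on generators, `1 ⊗ [x, y] + Σᵢ j(gᵢ) ⊗ μ(hᵢ)(x, y)` for
dual bases `hᵢ` of `H` and `gᵢ` of `H′`, the sum being the tensor corresponding to
`α ↦ μ(α)(x, y)` under `H′ ⊗ L ≃ Hom(H, L)`. -/
noncomputable def infinitesimalBracket [Module.Finite K H] [Module.Projective K H]
    (b : L →ₗ[K] L →ₗ[K] L) (μ : H →ₗ[K] L →ₗ[K] L →ₗ[K] L) (j : Module.Dual K H →ₗ[K] C) :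
    L →ₗ[K] L →ₗ[K] C ⊗[K] L :=
  b.compr₂ (TensorProduct.mk K C L 1) +
    (LinearMap.lflip.toLinearMap ∘ₗ μ.flip).compr₂
      (TensorProduct.map j LinearMap.id ∘ₗ (dualTensorHomEquiv K H L).symm.toLinearMap)

/-- The restriction of an `A`-bilinear bracket on `A ⊗ L` to the generators `1 ⊗ l`. -/
noncomputable def generatorBracket (B : C ⊗[K] L →ₗ[C] C ⊗[K] L →ₗ[C] C ⊗[K] L) :
    L →ₗ[K] L →ₗ[K] C ⊗[K] L :=
  (B.restrictScalars₁₂ K K).compl₁₂ (TensorProduct.mk K C L 1) (TensorProduct.mk K C L 1)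

@[simp]
theorem generatorBracket_apply (B : C ⊗[K] L →ₗ[C] C ⊗[K] L →ₗ[C] C ⊗[K] L) (x y : L) :
    generatorBracket B x y = B (1 ⊗ₜ x) (1 ⊗ₜ y) := rfl

end Leibniz

section SquareZero

variable {R C M A : Type*} [CommRing R] [CommRing C] [Algebra R C] [AddCommGroup M] [Module R M]
  [CommRing A] [Algebra R A] {ε : C →ₐ[R] R} {j : M →ₗ[R] C}

theorem exists_eq_algebraMap_add (hj : LinearMap.range j = LinearMap.ker ε.toLinearMap) (c : C) :
    ∃ m, c = algebraMap R C (ε c) + j m := by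
  have hc : c - algebraMap R C (ε c) ∈ LinearMap.range j := by simp [hj]
  obtain ⟨m, hm⟩ := hc
  exact ⟨m, by rw [hm, add_sub_cancel]⟩

theorem augmentation_apply_eq_zero (hj : LinearMap.range j = LinearMap.ker ε.toLinearMap) (m : M) :
    ε (j m) = 0 :=
  LinearMap.mem_ker.1 (hj ▸ LinearMap.mem_range_self j m)

theorem algHom_ext_of_augmentation (hj : LinearMap.range j = LinearMap.ker ε.toLinearMap)
    {φ ψ : C →ₐ[R] A} (h : ∀ m, φ (j m) = ψ (j m)) : φ = ψ := by
  ext c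
  obtain ⟨m, hm⟩ := exists_eq_algebraMap_add hj c
  rw [hm, map_add, map_add, AlgHom.commutes, AlgHom.commutes, h]

theorem exists_algHom_of_squareZero (hj : LinearMap.range j = LinearMap.ker ε.toLinearMap)
    (hj_inj : Function.Injective j) (hj_sq : ∀ m n, j m * j n = 0)
    (f : M →ₗ[R] A) (hf : ∀ m n, f m * f n = 0) : ∃ φ : C →ₐ[R] A, ∀ m, φ (j m) = f m := by
  let : Module Rᵐᵒᵖ M := Module.compHom M ((RingHom.id R).fromOpposite mul_comm)
  have : IsCentralScalar R M := ⟨fun _ _ => rfl⟩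
  let J : TrivSqZeroExt R M →ₐ[R] C := TrivSqZeroExt.liftEquivOfComm ⟨j, hj_sq⟩
  have hJ (r : R) (m : M) : J (.inl r + .inr m) = algebraMap R C r + j m := by
    simp [J, Algebra.ofId_apply]
  have hJ_bij : Function.Bijective J := by
    refine ⟨(injective_iff_map_eq_zero J).2 fun t ht => ?_, fun c => ?_⟩
    · rw [← TrivSqZeroExt.inl_fst_add_inr_snd_eq t, hJ] at ht
      have hfst : t.fst = 0 := by
        simpa [augmentation_apply_eq_zero hj] using congrArg ε ht
      have hsnd : t.snd = 0 := hj_inj (by simpa [hfst] using ht)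
      exact TrivSqZeroExt.ext hfst hsnd
    · obtain ⟨m, hm⟩ := exists_eq_algebraMap_add hj c
      exact ⟨.inl (ε c) + .inr m, by rw [hJ, ← hm]⟩
  let e := AlgEquiv.ofBijective J hJ_bij
  refine ⟨(TrivSqZeroExt.liftEquivOfComm ⟨f, hf⟩).comp e.symm, fun m => ?_⟩
  have hm : e.symm (j m) = .inr m := e.symm_apply_eq.2 (by simpa [e] using (hJ 0 m).symm)
  simp [hm]

end SquareZero

section DualAugmentation

variable {K A N M : Type*} [CommRing K] [CommRing A] [Algebra K A]
  [AddCommGroup N] [Module K N] [AddCommGroup M] [Module K M] (ε : A →ₐ[K] K)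

/-- The projection `ζ ↦ ζ - ζ(1) ε` of `A′` onto the functionals vanishing at `1`, which form the
dual of the augmentation ideal of `ε`. -/
def dualProjection : Module.Dual K A →ₗ[K] Module.Dual K A :=
  LinearMap.id - (Module.Dual.eval K A 1).smulRight ε.toLinearMap

theorem dualProjection_apply (ζ : Module.Dual K A) :
    dualProjection ε ζ = ζ - ζ 1 • ε.toLinearMap := rfl

theorem dualProjection_apply_one (ζ : Module.Dual K A) : dualProjection ε ζ 1 = 0 := by
  simp [dualProjection_apply]

theorem dualProjection_augmentation : dualProjection ε ε.toLinearMap = 0 := by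
  simp [dualProjection_apply]

theorem dualProjection_eq_self {ζ : Module.Dual K A} (hζ : ζ 1 = 0) : dualProjection ε ζ = ζ := by
  simp [dualProjection_apply, hζ]

variable {ε}

theorem dual_linearMap_ext {F G : Module.Dual K A →ₗ[K] N}
    (hε : F ε.toLinearMap = G ε.toLinearMap) (h : ∀ ζ, ζ 1 = 0 → F ζ = G ζ) : F = G := by
  ext ζ
  have hζ := h _ (dualProjection_apply_one ε ζ)
  rwa [dualProjection_apply, map_sub, map_sub, map_smul, map_smul, hε, sub_left_inj] at hζ

theorem exists_dual_lift [Module.Projective K (Module.Dual K A)] (p : M →ₗ[K] N)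
    (Ψ : Module.Dual K A →ₗ[K] N)
    (h : ∀ ζ, ζ 1 = 0 → Ψ ζ ∈ LinearMap.range p) :
    ∃ T : Module.Dual K A →ₗ[K] M, T ε.toLinearMap = 0 ∧ ∀ ζ, ζ 1 = 0 → p (T ζ) = Ψ ζ := by
  obtain ⟨T, hT⟩ := Module.projective_lifting_property p.rangeRestrict
    ((Ψ ∘ₗ dualProjection ε).codRestrict (LinearMap.range p)
      fun ζ => h _ (dualProjection_apply_one ε ζ)) p.surjective_rangeRestrict
  refine ⟨T ∘ₗ dualProjection ε, by simp [dualProjection_augmentation], fun ζ hζ => ?_⟩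
  simpa [dualProjection_eq_self ε hζ] using congrArg Subtype.val (LinearMap.congr_fun hT ζ)

theorem derivation_of_augmentation (hε : ∀ a b, ε a = 0 → ε b = 0 → a * b = 0)
    {ζ : Module.Dual K A} (hζ : ζ 1 = 0) (a b : A) : ζ (a * b) = ε a * ζ b + ζ a * ε b := by
  have h := hε (a - algebraMap K A (ε a)) (b - algebraMap K A (ε b)) (by simp) (by simp)
  have hab : a * b = ε a • b + ε b • a - (ε a * ε b) • (1 : A) := by
    simp only [Algebra.smul_def, map_mul]
    linear_combination h
  simp [hab, hζ, mul_comm]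

end DualAugmentation

section Reduction

variable {K A C H L L' : Type*} [Field K] [CommRing A] [Algebra K A] [CommRing C] [Algebra K C]
  [AddCommGroup H] [Module K H]
  [AddCommGroup L] [Module K L] [AddCommGroup L'] [Module K L']

@[simp]
theorem reduceTensor_tmul (ζ : Module.Dual K A) (a : A) (l : L) :
    reduceTensor ζ (a ⊗ₜ[K] l) = ζ a • l := by
  simp [reduceTensor]

theorem reduceTensor_map (ζ : Module.Dual K A) (φ : C →ₗ[K] A) (u : C ⊗[K] L) :
    reduceTensor ζ (TensorProduct.map φ LinearMap.id u) = reduceTensor (ζ ∘ₗ φ) u := by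
  induction u with
  | zero => simp
  | add u v hu hv => simp only [map_add, hu, hv]
  | tmul a l => simp

theorem reduceTensor_map_dualTensorHomEquiv_symm [FiniteDimensional K H] {ζ : Module.Dual K C}
    {j : Module.Dual K H →ₗ[K] C} {α : H} (h : ∀ f, ζ (j f) = f α) (F : H →ₗ[K] L) :
    reduceTensor ζ (TensorProduct.map j LinearMap.id ((dualTensorHomEquiv K H L).symm F))
      = F α := by
  obtain ⟨w, rfl⟩ := (dualTensorHomEquiv K H L).surjective F
  rw [LinearEquiv.symm_apply_apply]
  induction w with
  | zero => simp
  | add u v hu hv => simp only [map_add, hu, hv, LinearMap.add_apply]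
  | tmul f l => simp [h]

theorem reduceTensor_algHom_smul (ε : A →ₐ[K] K) (a : A) (u : A ⊗[K] L) :
    reduceTensor ε.toLinearMap (a • u) = ε a • reduceTensor ε.toLinearMap u := by
  induction u with
  | zero => simp
  | add u v hu hv => simp only [smul_add, map_add, hu, hv]
  | tmul c l => simp [TensorProduct.smul_tmul', mul_smul]

theorem reduceTensor_derivation_smul {ε : A →ₐ[K] K} {ζ : Module.Dual K A}
    (hζ : ∀ a b, ζ (a * b) = ε a * ζ b + ζ a * ε b) (a : A) (u : A ⊗[K] L) :
    reduceTensor ζ (a • u)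
      = ε a • reduceTensor ζ u + ζ a • reduceTensor ε.toLinearMap u := by
  induction u with
  | zero => simp
  | add u v hu hv => simp only [smul_add, map_add, hu, hv]; abel
  | tmul c l => simp [TensorProduct.smul_tmul', hζ, add_smul, mul_smul]

/-- `reduceTensor` as a linear function of the functional. -/
noncomputable def reduceTensorHom : Module.Dual K A →ₗ[K] A ⊗[K] L →ₗ[K] L :=
  (LinearMap.rTensorHom L).compr₂ (TensorProduct.lid K L).toLinearMap

theorem eq_of_forall_reduceTensor_eq {u v : A ⊗[K] L}
    (h : ∀ ζ : Module.Dual K A, reduceTensor ζ u = reduceTensor ζ v) : u = v := by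
  classical
  let e := TensorProduct.equivFinsuppOfBasisLeft (N := L) (Module.Basis.ofVectorSpace K A)
  have he i (w : A ⊗[K] L) :
      e w i = reduceTensor ((Module.Basis.ofVectorSpace K A).coord i) w := by
    induction w with
    | zero => simp
    | add w w' hw hw' => simp [hw, hw']
    | tmul a l => simp [e]
  exact e.injective (Finsupp.ext fun i => by rw [he, he, h])

theorem tensor_ext_of_augmentation {ε : A →ₐ[K] K} {u v : A ⊗[K] L}
    (hε : reduceTensor ε.toLinearMap u = reduceTensor ε.toLinearMap v)
    (h : ∀ ζ : Module.Dual K A, ζ 1 = 0 → reduceTensor ζ u = reduceTensor ζ v) : u = v :=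
  eq_of_forall_reduceTensor_eq <| LinearMap.congr_fun <|
    dual_linearMap_ext (F := reduceTensorHom.flip u) (G := reduceTensorHom.flip v) hε h

theorem exists_forall_reduceTensor_eq [FiniteDimensional K A]
    (G : Module.Dual K A →ₗ[K] L →ₗ[K] L') :
    ∃ n : L →ₗ[K] A ⊗[K] L', ∀ ζ x, reduceTensor ζ (n x) = G ζ x :=
  ⟨TensorProduct.map (Module.evalEquiv K A).symm.toLinearMap LinearMap.id ∘ₗ
      (dualTensorHomEquiv K (Module.Dual K A) L').symm.toLinearMap ∘ₗ G.flip,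
    fun _ _ => reduceTensor_map_dualTensorHomEquiv_symm (by simp) _⟩

variable {ε : A →ₐ[K] K} (hε : ∀ a b, ε a = 0 → ε b = 0 → a * b = 0)
include hε

theorem reduceTensor_linearMap_apply {ζ : Module.Dual K A} (hζ : ζ 1 = 0)
    {f : A ⊗[K] L →ₗ[A] A ⊗[K] L'} {f₀ : L →ₗ[K] L'}
    (hf : ∀ t, reduceTensor ε.toLinearMap (f t) = f₀ (reduceTensor ε.toLinearMap t))
    (t : A ⊗[K] L) :
    reduceTensor ζ (f t)
      = reduceTensor ζ (f (1 ⊗ₜ reduceTensor ε.toLinearMap t)) + f₀ (reduceTensor ζ t) := by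
  induction t with
  | zero => simp
  | add s t hs ht => simp only [map_add, hs, ht, TensorProduct.tmul_add]; abel
  | tmul a x =>
    have ha : a ⊗ₜ[K] x = a • (1 : A) ⊗ₜ[K] x := by simp [TensorProduct.smul_tmul']
    rw [ha, map_smul, reduceTensor_derivation_smul (derivation_of_augmentation hε hζ), hf, ← ha]
    simp [LinearMap.map_smul_of_tower]

theorem reduceTensor_bilinearMap_apply {ζ : Module.Dual K A} (hζ : ζ 1 = 0)
    {B : A ⊗[K] L →ₗ[A] A ⊗[K] L →ₗ[A] A ⊗[K] L} {b : L →ₗ[K] L →ₗ[K] L}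
    (hB : ∀ s t, reduceTensor ε.toLinearMap (B s t)
      = b (reduceTensor ε.toLinearMap s) (reduceTensor ε.toLinearMap t))
    (s t : A ⊗[K] L) :
    reduceTensor ζ (B s t)
      = reduceTensor ζ (B (1 ⊗ₜ reduceTensor ε.toLinearMap s) (1 ⊗ₜ reduceTensor ε.toLinearMap t))
        + b (reduceTensor ζ s) (reduceTensor ε.toLinearMap t)
        + b (reduceTensor ε.toLinearMap s) (reduceTensor ζ t) := by
  rw [reduceTensor_linearMap_apply hε hζ (f := B s) (hB s)]
  congr 1
  exact reduceTensor_linearMap_apply hε hζ (f := B.flip (1 ⊗ₜ reduceTensor ε.toLinearMap t))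
    (f₀ := b.flip (reduceTensor ε.toLinearMap t)) (fun s => by simp [hB]) s

theorem apply_apply_eq_zero_of_reduceTensor_eq_zero {N : A ⊗[K] L →ₗ[A] A ⊗[K] L}
    (hN : ∀ t, reduceTensor ε.toLinearMap (N t) = 0) (t : A ⊗[K] L) : N (N t) = 0 := by
  refine tensor_ext_of_augmentation (ε := ε) (by simp [hN]) fun ζ hζ => ?_
  rw [reduceTensor_linearMap_apply hε hζ (f₀ := 0) (by simpa using hN), hN]
  simp

theorem exists_linearEquiv_one_tmul_eq {n : L →ₗ[K] A ⊗[K] L}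
    (hn : ∀ x, reduceTensor ε.toLinearMap (n x) = 0) :
    ∃ Φ : (A ⊗[K] L) ≃ₗ[A] (A ⊗[K] L),
      (∀ t, reduceTensor ε.toLinearMap (Φ t) = reduceTensor ε.toLinearMap t) ∧
        ∀ x, Φ (1 ⊗ₜ x) = 1 ⊗ₜ x + n x := by
  let N : A ⊗[K] L →ₗ[A] A ⊗[K] L := n.liftBaseChange A
  have hN (t) : reduceTensor ε.toLinearMap (N t) = 0 := by
    induction t with
    | zero => simp
    | add s t hs ht => simp [hs, ht]
    | tmul a x => simp [N, reduceTensor_algHom_smul, hn]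
  have hNN := apply_apply_eq_zero_of_reduceTensor_eq_zero hε hN
  refine ⟨.ofLinearMap (.id + N) (.id - N) ?_ ?_, fun t => ?_, fun x => ?_⟩
  · exact LinearMap.ext fun t => by simp [hNN]
  · exact LinearMap.ext fun t => by simp [hNN]
  · simp [hN]
  · simp [N]

end Reduction

section Deformation

variable {K A C H L : Type*} [Field K] [CommRing A] [Algebra K A] [CommRing C] [Algebra K C]
  [AddCommGroup H] [Module K H] [AddCommGroup L] [Module K L]

/-- `B` is the bracket of a deformation of `(L, b)` with base `A`, augmented by `ε`. -/
structure IsLeibnizDeformation (ε : A →ₐ[K] K) (b : L →ₗ[K] L →ₗ[K] L)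
    (B : A ⊗[K] L →ₗ[A] A ⊗[K] L →ₗ[A] A ⊗[K] L) : Prop where
  leibniz : ∀ x y z, B x (B y z) = B (B x y) z - B (B x z) y
  reduce : ∀ x y, reduceTensor ε.toLinearMap (B x y)
    = b (reduceTensor ε.toLinearMap x) (reduceTensor ε.toLinearMap y)

/-- The deformation over `A` given on generators by `c` is equivalent to the one with bracket `B`:
some `A`-linear automorphism lifting the identity of `L` carries the former to the latter. -/
def IsEquivalentDeformation (ε : A →ₐ[K] K) (c : L →ₗ[K] L →ₗ[K] A ⊗[K] L)
    (B : A ⊗[K] L →ₗ[A] A ⊗[K] L →ₗ[A] A ⊗[K] L) : Prop :=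
  ∃ Φ : (A ⊗[K] L) ≃ₗ[A] (A ⊗[K] L),
    (∀ x, reduceTensor ε.toLinearMap (Φ x) = reduceTensor ε.toLinearMap x) ∧
      ∀ x y, Φ (c x y) = B (Φ (1 ⊗ₜ x)) (Φ (1 ⊗ₜ y))

/-- The 2-cochain `(ζ ⊗ id) ∘ c` of `L` cut out by a functional `ζ` on the base from a bracket `c`
given on generators. -/
noncomputable def deformationCochain (c : L →ₗ[K] L →ₗ[K] A ⊗[K] L) :
    Module.Dual K A →ₗ[K] L →ₗ[K] L →ₗ[K] L :=
  LinearMap.lcomp K _ c ∘ₗ LinearMap.llcomp K L (A ⊗[K] L) L ∘ₗ reduceTensorHom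

@[simp]
theorem deformationCochain_apply (c : L →ₗ[K] L →ₗ[K] A ⊗[K] L) (ζ : Module.Dual K A) (x y : L) :
    deformationCochain c ζ x y = reduceTensor ζ (c x y) := rfl

/-- The push-out `φ_*η₁`, given on generators. -/
noncomputable def pushoutBracket (φ : C →ₐ[K] A) (c : L →ₗ[K] L →ₗ[K] C ⊗[K] L) :
    L →ₗ[K] L →ₗ[K] A ⊗[K] L :=
  c.compr₂ (TensorProduct.map φ.toLinearMap LinearMap.id)

theorem reduceTensor_pushout_infinitesimalBracket [FiniteDimensional K H]
    {b : L →ₗ[K] L →ₗ[K] L} {μ : H →ₗ[K] L →ₗ[K] L →ₗ[K] L} {j : Module.Dual K H →ₗ[K] C}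
    {φ : C →ₐ[K] A} {ζ : Module.Dual K A} {α : H} (h : ∀ f, ζ (φ (j f)) = f α) (x y : L) :
    reduceTensor ζ (pushoutBracket φ (infinitesimalBracket b μ j) x y)
      = ζ 1 • b x y + μ α x y := by
  have hj := reduceTensor_map_dualTensorHomEquiv_symm (ζ := ζ ∘ₗ φ.toLinearMap) h
    ((μ.flip x).flip y)
  change reduceTensor ζ (TensorProduct.map φ.toLinearMap LinearMap.id
    (1 ⊗ₜ b x y + TensorProduct.map j LinearMap.id
      ((dualTensorHomEquiv K H L).symm ((μ.flip x).flip y)))) = _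
  rw [reduceTensor_map, map_add, hj]
  simp

variable {ε : A →ₐ[K] K} (hε : ∀ a b, ε a = 0 → ε b = 0 → a * b = 0)
  {b : L →ₗ[K] L →ₗ[K] L} {B : A ⊗[K] L →ₗ[A] A ⊗[K] L →ₗ[A] A ⊗[K] L}
  (hB : IsLeibnizDeformation ε b B)
include hε hB

theorem deformationCochain_mem_leibnizCocycles {ζ : Module.Dual K A} (hζ : ζ 1 = 0) :
    deformationCochain (generatorBracket B) ζ ∈ leibnizCocycles b := by
  intro x y z
  have hred (s t : A ⊗[K] L) := reduceTensor_bilinearMap_apply hε hζ hB.reduce s t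
  have h := congrArg (reduceTensor ζ) (hB.leibniz (1 ⊗ₜ x) (1 ⊗ₜ y) (1 ⊗ₜ z))
  rw [map_sub, hred _ (B _ _), hred (B _ _), hred (B _ _)] at h
  simp only [hB.reduce, reduceTensor_tmul, hζ, AlgHom.toLinearMap_apply, map_one, one_smul,
    zero_smul, map_zero, LinearMap.zero_apply, add_zero] at h
  simp only [deformationCochain_apply, generatorBracket_apply]
  rw [← sub_eq_zero.2 h]
  abel

theorem intertwines_iff_deformationCochain_eq {c : L →ₗ[K] L →ₗ[K] A ⊗[K] L}
    (hc : ∀ x y, reduceTensor ε.toLinearMap (c x y) = b x y)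
    {Φ : (A ⊗[K] L) ≃ₗ[A] (A ⊗[K] L)}
    (hΦ : ∀ x, reduceTensor ε.toLinearMap (Φ x) = reduceTensor ε.toLinearMap x) :
    (∀ x y, Φ (c x y) = B (Φ (1 ⊗ₜ x)) (Φ (1 ⊗ₜ y))) ↔
      ∀ ζ : Module.Dual K A, ζ 1 = 0 → deformationCochain c ζ =
        deformationCochain (generatorBracket B) ζ + leibnizCoboundary b
          (reduceTensor ζ ∘ₗ Φ.toLinearMap.restrictScalars K ∘ₗ TensorProduct.mk K A L 1) := by
  have hleft {ζ : Module.Dual K A} (hζ : ζ 1 = 0) (x y : L) :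
      reduceTensor ζ (Φ (c x y)) = reduceTensor ζ (Φ (1 ⊗ₜ b x y)) + reduceTensor ζ (c x y) := by
    simpa [hc] using reduceTensor_linearMap_apply hε hζ (f := Φ.toLinearMap)
      (f₀ := LinearMap.id) hΦ (c x y)
  have hright {ζ : Module.Dual K A} (hζ : ζ 1 = 0) (x y : L) :
      reduceTensor ζ (B (Φ (1 ⊗ₜ x)) (Φ (1 ⊗ₜ y))) = reduceTensor ζ (B (1 ⊗ₜ x) (1 ⊗ₜ y))
        + b (reduceTensor ζ (Φ (1 ⊗ₜ x))) y + b x (reduceTensor ζ (Φ (1 ⊗ₜ y))) := by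
    simpa [hΦ] using reduceTensor_bilinearMap_apply hε hζ hB.reduce (Φ (1 ⊗ₜ x)) (Φ (1 ⊗ₜ y))
  constructor
  · intro h ζ hζ
    ext x y
    have hxy := congrArg (reduceTensor ζ) (h x y)
    rw [hleft hζ, hright hζ] at hxy
    simp only [LinearMap.add_apply, deformationCochain_apply, generatorBracket_apply,
      leibnizCoboundary_apply, LinearMap.comp_apply, LinearMap.restrictScalars_apply,
      LinearEquiv.coe_coe, TensorProduct.mk_apply]
    rw [eq_sub_of_add_eq' hxy]
    abel
  · intro h x y
    refine tensor_ext_of_augmentation (ε := ε) (by simp [hΦ, hc, hB.reduce]) fun ζ hζ => ?_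
    have hxy := LinearMap.congr_fun₂ (h ζ hζ) x y
    simp only [LinearMap.add_apply, deformationCochain_apply, generatorBracket_apply,
      leibnizCoboundary_apply, LinearMap.comp_apply, LinearMap.restrictScalars_apply,
      LinearEquiv.coe_coe, TensorProduct.mk_apply] at hxy
    rw [hleft hζ, hright hζ, hxy]
    abel

theorem isEquivalentDeformation_iff_leibnizClass_eq [FiniteDimensional K A]
    {c : L →ₗ[K] L →ₗ[K] A ⊗[K] L} (hc : ∀ x y, reduceTensor ε.toLinearMap (c x y) = b x y) :
    IsEquivalentDeformation ε c B ↔ ∀ ζ : Module.Dual K A, ζ 1 = 0 →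
      leibnizClass b (deformationCochain c ζ)
        = leibnizClass b (deformationCochain (generatorBracket B) ζ) := by
  constructor
  · rintro ⟨Φ, hΦ, hΦB⟩ ζ hζ
    exact leibnizClass_eq_iff.2 ⟨_, (intertwines_iff_deformationCochain_eq hε hB hc hΦ).1 hΦB ζ hζ⟩
  · intro h
    obtain ⟨G, hGε, hG⟩ := exists_dual_lift (ε := ε) (leibnizCoboundary b)
      (deformationCochain c - deformationCochain (generatorBracket B)) fun ζ hζ => by
        obtain ⟨g, hg⟩ := leibnizClass_eq_iff.1 (h ζ hζ)
        exact ⟨g, by simp [hg]⟩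
    obtain ⟨n, hn⟩ := exists_forall_reduceTensor_eq G
    obtain ⟨Φ, hΦ, hΦn⟩ := exists_linearEquiv_one_tmul_eq hε (n := n) (by simp [hn, hGε])
    refine ⟨Φ, hΦ, (intertwines_iff_deformationCochain_eq hε hB hc hΦ).2 fun ζ hζ => ?_⟩
    have hΦG : reduceTensor ζ ∘ₗ Φ.toLinearMap.restrictScalars K ∘ₗ TensorProduct.mk K A L 1
        = G ζ := by
      ext x
      simp [hΦn, hζ, hn]
    rw [hΦG, hG ζ hζ, LinearMap.sub_apply, add_sub_cancel]

end Deformation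

section Universality

variable {K A C H L : Type*} [Field K] [CommRing A] [Algebra K A] [CommRing C] [Algebra K C]
  [AddCommGroup H] [Module K H] [AddCommGroup L] [Module K L]
  {ε : A →ₐ[K] K} {ε₁ : C →ₐ[K] K} {j : Module.Dual K H →ₗ[K] C}
  (hj : LinearMap.range j = LinearMap.ker ε₁.toLinearMap)
include hj

theorem exists_augmented_algHom [FiniteDimensional K A]
    (hε : ∀ a b, ε a = 0 → ε b = 0 → a * b = 0) (hj_inj : Function.Injective j)
    (hj_sq : ∀ f g, j f * j g = 0) {T : Module.Dual K A →ₗ[K] H} (hT : T ε.toLinearMap = 0) :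
    ∃ φ : C →ₐ[K] A, ε.comp φ = ε₁ ∧
      ∀ (ζ : Module.Dual K A) (f : Module.Dual K H), ζ (φ (j f)) = f (T ζ) := by
  let F : Module.Dual K H →ₗ[K] A := (Module.evalEquiv K A).symm.toLinearMap ∘ₗ T.dualMap
  have hF (ζ : Module.Dual K A) (f : Module.Dual K H) : ζ (F f) = f (T ζ) := by simp [F]
  have hεF (f : Module.Dual K H) : ε (F f) = 0 := by simpa [hT] using hF ε.toLinearMap f
  obtain ⟨φ, hφ⟩ := exists_algHom_of_squareZero hj hj_inj hj_sq F
    fun f g => hε _ _ (hεF f) (hεF g)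
  refine ⟨φ, algHom_ext_of_augmentation hj fun f => ?_, fun ζ f => by rw [hφ, hF]⟩
  rw [AlgHom.comp_apply, hφ, hεF, augmentation_apply_eq_zero hj]

theorem augmented_algHom_ext {φ ψ : C →ₐ[K] A} (hφ : ε.comp φ = ε₁) (hψ : ε.comp ψ = ε₁)
    (h : ∀ ζ : Module.Dual K A, ζ 1 = 0 → ∀ f, ζ (φ (j f)) = ζ (ψ (j f))) : φ = ψ := by
  refine algHom_ext_of_augmentation hj fun f => Module.eval_apply_injective K ?_
  refine dual_linearMap_ext (ε := ε) ?_ fun ζ hζ => h ζ hζ f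
  exact DFunLike.congr_fun (hφ.trans hψ.symm) (j f)

variable [FiniteDimensional K H] {b : L →ₗ[K] L →ₗ[K] L} {μ : H →ₗ[K] L →ₗ[K] L →ₗ[K] L}

theorem reduceTensor_augmentation_pushout {φ : C →ₐ[K] A} (hφ : ε.comp φ = ε₁) (x y : L) :
    reduceTensor ε.toLinearMap (pushoutBracket φ (infinitesimalBracket b μ j) x y) = b x y := by
  have hφj (f : Module.Dual K H) : ε.toLinearMap (φ (j f)) = f 0 := by
    rw [AlgHom.toLinearMap_apply, ← AlgHom.comp_apply, hφ, augmentation_apply_eq_zero hj, map_zero]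
  simp [reduceTensor_pushout_infinitesimalBracket hφj]

variable [FiniteDimensional K A] (hε : ∀ a b, ε a = 0 → ε b = 0 → a * b = 0)
  {B : A ⊗[K] L →ₗ[A] A ⊗[K] L →ₗ[A] A ⊗[K] L} (hB : IsLeibnizDeformation ε b B)
include hε hB

theorem isEquivalentDeformation_pushout_iff {φ : C →ₐ[K] A} (hφ : ε.comp φ = ε₁)
    {T : Module.Dual K A → H}
    (hT : ∀ (ζ : Module.Dual K A) (f : Module.Dual K H), ζ (φ (j f)) = f (T ζ)) :
    IsEquivalentDeformation ε (pushoutBracket φ (infinitesimalBracket b μ j)) B ↔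
      ∀ ζ : Module.Dual K A, ζ 1 = 0 → leibnizClass b (μ (T ζ))
        = leibnizClass b (deformationCochain (generatorBracket B) ζ) := by
  rw [isEquivalentDeformation_iff_leibnizClass_eq hε hB (reduceTensor_augmentation_pushout hj hφ)]
  refine forall₂_congr fun ζ hζ => ?_
  have hμ : deformationCochain (pushoutBracket φ (infinitesimalBracket b μ j)) ζ = μ (T ζ) := by
    ext x y
    simp [reduceTensor_pushout_infinitesimalBracket (hT ζ), hζ]
  rw [hμ]

end Universality

theorem universal_infinitesimal_deformation_general
    {K L H C A : Type*} [Field K] [AddCommGroup L] [Module K L]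
    [AddCommGroup H] [Module K H] [FiniteDimensional K H]
    [CommRing C] [Algebra K C] [CommRing A] [Algebra K A] [FiniteDimensional K A]
    {b : L →ₗ[K] L →ₗ[K] L} {μ : H →ₗ[K] L →ₗ[K] L →ₗ[K] L}
    (hμ_inj : Function.Injective (leibnizClass b ∘ₗ μ))
    (hμ_range : LinearMap.range (leibnizClass b ∘ₗ μ) = leibnizCohomology b)
    {ε₁ : C →ₐ[K] K} {j : Module.Dual K H →ₗ[K] C} (hj_inj : Function.Injective j)
    (hj : LinearMap.range j = LinearMap.ker ε₁.toLinearMap) (hj_sq : ∀ f g, j f * j g = 0)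
    {ε : A →ₐ[K] K} (hε : ∀ a b, ε a = 0 → ε b = 0 → a * b = 0)
    {B : A ⊗[K] L →ₗ[A] A ⊗[K] L →ₗ[A] A ⊗[K] L} (hB : IsLeibnizDeformation ε b B) :
    ∃! φ : C →ₐ[K] A, ε.comp φ = ε₁ ∧
      IsEquivalentDeformation ε (pushoutBracket φ (infinitesimalBracket b μ j)) B := by
  apply existsUnique_of_exists_of_unique
  · obtain ⟨T, hTε, hT⟩ := exists_dual_lift (ε := ε) (leibnizClass b ∘ₗ μ)
      (leibnizClass b ∘ₗ deformationCochain (generatorBracket B)) fun ζ hζ =>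
        hμ_range ▸ Submodule.mem_map_of_mem (deformationCochain_mem_leibnizCocycles hε hB hζ)
    obtain ⟨φ, hφ, hφT⟩ := exists_augmented_algHom hj hε hj_inj hj_sq hTε
    exact ⟨φ, hφ, (isEquivalentDeformation_pushout_iff hj hε hB hφ hφT).2 hT⟩
  · rintro φ ψ ⟨hφ, hφB⟩ ⟨hψ, hψB⟩
    have hrep (χ : C →ₐ[K] A) (ζ : Module.Dual K A) : ∃ α : H, ∀ f, ζ (χ (j f)) = f α :=
      ⟨(Module.evalEquiv K H).symm (ζ ∘ₗ χ.toLinearMap ∘ₗ j), by simp⟩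
    choose T hT using hrep
    refine augmented_algHom_ext hj hφ hψ fun ζ hζ f => ?_
    have hφζ := (isEquivalentDeformation_pushout_iff hj hε hB hφ (hT φ)).1 hφB ζ hζ
    have hψζ := (isEquivalentDeformation_pushout_iff hj hε hB hψ (hT ψ)).1 hψB ζ hζ
    rw [hT, hT, hμ_inj (hφζ.trans hψζ.symm)]

/-- Universality of the infinitesimal deformation `η₁` with base `C₁ = K ⊕ H′`:
for any infinitesimal deformation `λ` of `L` with finite dimensional base `A`
there is a unique augmentation-preserving algebra homomorphism `φ : C₁ → A`
such that the push-out `φ_*η₁` is equivalent to `λ`.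

`H` plays the role of `HL²(L;L)` via the section `μ : H → CL²(L;L)`, which
sends classes to representing cocycles, is injective modulo coboundaries and
hits every cocycle modulo coboundaries.  The algebra `C₁` is presented as an
augmented algebra with square-zero augmentation ideal identified with `H′`
via `j`, and `η₁` is the deformation with
`[1⊗l₁,1⊗l₂]_{η₁} = 1⊗[l₁,l₂] + Σᵢ gᵢ ⊗ μᵢ(l₁,l₂)`, written coordinate-freely
through `dualTensorHomEquiv`. -/
theorem universal_infinitesimal_deformation
    {K L H C₁ A : Type*} [Field K] [CharZero K]
    [AddCommGroup L] [Module K L]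
    [AddCommGroup H] [Module K H] [FiniteDimensional K H]
    [CommRing C₁] [Algebra K C₁]
    [CommRing A] [Algebra K A] [FiniteDimensional K A] [IsLocalRing A]
    -- the Leibniz algebra L
    (bll : L → L → L)
    (h_add_left : ∀ x y z : L, bll (x + y) z = bll x z + bll y z)
    (h_add_right : ∀ x y z : L, bll x (y + z) = bll x y + bll x z)
    (h_smul_left : ∀ (c : K) (x y : L), bll (c • x) y = c • bll x y)
    (h_smul_right : ∀ (c : K) (x y : L), bll x (c • y) = c • bll x y)
    (h_leibniz : ∀ x y z : L, bll x (bll y z) = bll (bll x y) z - bll (bll x z) y)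
    -- μ : H → CL²(L;L), a linear section of the projection onto H = HL²(L;L)
    (μ : H → L → L → L)
    (hμ_addH : ∀ (α β : H) (x y : L), μ (α + β) x y = μ α x y + μ β x y)
    (hμ_smulH : ∀ (c : K) (α : H) (x y : L), μ (c • α) x y = c • μ α x y)
    (hμ_add_left : ∀ (α : H) (x y z : L), μ α (x + y) z = μ α x z + μ α y z)
    (hμ_add_right : ∀ (α : H) (x y z : L), μ α x (y + z) = μ α x y + μ α x z)
    (hμ_smul_left : ∀ (α : H) (c : K) (x y : L), μ α (c • x) y = c • μ α x y)
    (hμ_smul_right : ∀ (α : H) (c : K) (x y : L), μ α x (c • y) = c • μ α x y)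
    (hμ_cocycle : ∀ (α : H) (x y z : L),
      bll x (μ α y z) + bll (μ α x z) y - bll (μ α x y) z
        - μ α (bll x y) z + μ α (bll x z) y + μ α x (bll y z) = 0)
    -- μ is injective into cohomology
    (hμ_inj : ∀ α : H,
      (∃ g : L →ₗ[K] L, ∀ x y : L,
        μ α x y = bll x (g y) + bll (g x) y - g (bll x y)) → α = 0)
    -- every 2-cocycle is cohomologous to some μ(α)
    (hμ_full : ∀ ψ : L → L → L,
      (∀ x y z : L, ψ (x + y) z = ψ x z + ψ y z) →
      (∀ x y z : L, ψ x (y + z) = ψ x y + ψ x z) →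
      (∀ (c : K) (x y : L), ψ (c • x) y = c • ψ x y) →
      (∀ (c : K) (x y : L), ψ x (c • y) = c • ψ x y) →
      (∀ x y z : L,
        bll x (ψ y z) + bll (ψ x z) y - bll (ψ x y) z
          - ψ (bll x y) z + ψ (bll x z) y + ψ x (bll y z) = 0) →
      ∃ (α : H) (g : L →ₗ[K] L), ∀ x y : L,
        ψ x y = μ α x y + (bll x (g y) + bll (g x) y - g (bll x y)))
    -- C₁ = K ⊕ H′ : augmented algebra with square-zero ideal H′
    (ε₁ : C₁ →ₐ[K] K)
    (j : Module.Dual K H →ₗ[K] C₁)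
    (hj_inj : Function.Injective j)
    (hj_range : LinearMap.range j = LinearMap.ker ε₁.toLinearMap)
    (hj_sq : ∀ f g : Module.Dual K H, j f * j g = 0)
    -- η₁ : the universal infinitesimal deformation with base C₁
    (br₁ : C₁ ⊗[K] L → C₁ ⊗[K] L → C₁ ⊗[K] L)
    (hbr₁_add_left : ∀ x y z, br₁ (x + y) z = br₁ x z + br₁ y z)
    (hbr₁_add_right : ∀ x y z, br₁ x (y + z) = br₁ x y + br₁ x z)
    (hbr₁_smul_left : ∀ (c : C₁) x y, br₁ (c • x) y = c • br₁ x y)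
    (hbr₁_smul_right : ∀ (c : C₁) x y, br₁ x (c • y) = c • br₁ x y)
    (hbr₁_leibniz : ∀ x y z, br₁ x (br₁ y z) = br₁ (br₁ x y) z - br₁ (br₁ x z) y)
    (hcompat₁ : ∀ x y,
      reduceTensor ε₁.toLinearMap (br₁ x y)
        = bll (reduceTensor ε₁.toLinearMap x) (reduceTensor ε₁.toLinearMap y))
    (hgen : ∀ l₁ l₂ : L,
      br₁ ((1 : C₁) ⊗ₜ[K] l₁) ((1 : C₁) ⊗ₜ[K] l₂)
        = (1 : C₁) ⊗ₜ[K] bll l₁ l₂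
          + TensorProduct.map j LinearMap.id
              ((dualTensorHomEquiv K H L).symm
                ⟨⟨fun α => μ α l₁ l₂, fun α β => hμ_addH α β l₁ l₂⟩,
                  fun c α => hμ_smulH c α l₁ l₂⟩))
    -- λ : an infinitesimal deformation of L with base A (𝔐² = 0)
    (ε : A →ₐ[K] K)
    (hM2 : ∀ a b : A, ε a = 0 → ε b = 0 → a * b = 0)
    (brA : A ⊗[K] L → A ⊗[K] L → A ⊗[K] L)
    (hbrA_add_left : ∀ x y z, brA (x + y) z = brA x z + brA y z)
    (hbrA_add_right : ∀ x y z, brA x (y + z) = brA x y + brA x z)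
    (hbrA_smul_left : ∀ (a : A) x y, brA (a • x) y = a • brA x y)
    (hbrA_smul_right : ∀ (a : A) x y, brA x (a • y) = a • brA x y)
    (hbrA_leibniz : ∀ x y z, brA x (brA y z) = brA (brA x y) z - brA (brA x z) y)
    (hcompatA : ∀ x y,
      reduceTensor ε.toLinearMap (brA x y)
        = bll (reduceTensor ε.toLinearMap x) (reduceTensor ε.toLinearMap y)) :
    ∃! φ : C₁ →ₐ[K] A,
      ε.comp φ = ε₁ ∧
      ∃ Φ : (A ⊗[K] L) ≃ₗ[A] (A ⊗[K] L),
        (∀ x, reduceTensor ε.toLinearMap (Φ x) = reduceTensor ε.toLinearMap x)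
        ∧ ∀ l₁ l₂ : L,
            Φ (TensorProduct.map φ.toLinearMap LinearMap.id
                (br₁ ((1 : C₁) ⊗ₜ[K] l₁) ((1 : C₁) ⊗ₜ[K] l₂)))
              = brA (Φ ((1 : A) ⊗ₜ[K] l₁)) (Φ ((1 : A) ⊗ₜ[K] l₂)) := by
  let b := LinearMap.mk₂ K bll h_add_left h_smul_left h_add_right h_smul_right
  let m : H →ₗ[K] L →ₗ[K] L →ₗ[K] L :=
    { toFun := fun α => LinearMap.mk₂ K (μ α) (hμ_add_left α) (hμ_smul_left α) (hμ_add_right α)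
        (hμ_smul_right α)
      map_add' := fun α β => LinearMap.ext₂ (hμ_addH α β)
      map_smul' := fun c α => LinearMap.ext₂ (hμ_smulH c α) }
  have hm_inj : Function.Injective (leibnizClass b ∘ₗ m) :=
    injective_leibnizClass_comp fun α ⟨g, hg⟩ => hμ_inj α ⟨g, LinearMap.congr_fun₂ hg⟩
  have hm_range : LinearMap.range (leibnizClass b ∘ₗ m) = leibnizCohomology b :=
    range_leibnizClass_comp hμ_cocycle fun ψ hψ => by
      obtain ⟨α, g, hg⟩ := hμ_full (fun x y => ψ x y) (by simp) (by simp) (by simp) (by simp) hψ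
      exact ⟨α, g, LinearMap.ext₂ hg⟩
  let B := LinearMap.mk₂ A brA hbrA_add_left hbrA_smul_left hbrA_add_right hbrA_smul_right
  have hB : IsLeibnizDeformation ε b B := ⟨hbrA_leibniz, hcompatA⟩
  simp only [hgen]
  exact universal_infinitesimal_deformation_general hm_inj hm_range hj_inj hj_range hj_sq hM2 hB
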